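/- arXiv:2506.18549 — 3 statements merged into one kernel-verified Lean document; each statement's English description precedes it below -/
import Mathlib

section
/- Let n and c be natural numbers with c ≤ n. A partition P of ZMod (2^n) with exactly 2^c blocks is shift-invariant if and only if P is the residue-class partition modulo 2^c, i.e. the blocks of P are exactly the fibers of the reduction ring homomorphism ZMod (2^n) → ZMod (2^c) (equivalently, the sets {x : ZMod (2^n) | the reduction of x mod 2^c equals μ} for μ ranging over ZMod (2^c)). -/
/-!
A partition `P` of an additive group that is preserved by every translation consists of the cosets
of a subgroup, namely of the block containing `0`, and the index of this subgroup is the number of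
blocks. A subgroup of a cyclic group is determined by its index, so if `P` has as many blocks as the
target of a surjective homomorphism `φ` has elements, the subgroup is the kernel of `φ`, whose
cosets are the fibers of `φ`. Invariance need only be tested on a generator, since the translations
preserving `P` form a group.
-/

open AddAction AddSubgroup
open scoped Pointwise

section Action

variable {G X : Type*} [AddGroup G] [AddAction G X] {P : Set (Set X)} {B : Set X}

lemma vadd_eq_iff_forall_vadd_mem_of_isPartition (hP : Setoid.IsPartition P) (g : G) :
    g +ᵥ P = P ↔ ∀ A ∈ P, g +ᵥ A ∈ P := by
  refine ⟨fun h A hA ↦ h ▸ Set.vadd_mem_vadd_set hA, fun h ↦ ?_⟩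
  refine (Set.image_subset_iff.2 h).antisymm fun A hA ↦ ?_
  obtain ⟨a, ha⟩ := Setoid.nonempty_of_mem_partition hP hA
  obtain ⟨C, ⟨hC, haC⟩, -⟩ := hP.2 (-g +ᵥ a)
  have hCA : g +ᵥ C = A :=
    Setoid.eq_of_mem_eqv_class hP.2 (h C hC) (Set.mem_vadd_set_iff_neg_vadd_mem.2 haC) hA ha
  exact ⟨C, hC, hCA⟩

lemma forall_vadd_eq_iff_of_zmultiples_eq_top {g : G} (hg : zmultiples g = ⊤) (x : X) :
    (∀ h : G, h +ᵥ x = x) ↔ g +ᵥ x = x := by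
  refine ⟨fun h ↦ h g, fun h k ↦ ?_⟩
  have hle : zmultiples g ≤ stabilizer G x := zmultiples_le_of_mem h
  exact hle (hg ▸ mem_top k)

lemma isBlock_of_isPartition (hP : Setoid.IsPartition P) (hG : ∀ g : G, g +ᵥ P = P)
    (hB : B ∈ P) : IsBlock G B :=
  isBlock_iff_vadd_eq_of_mem.2 fun g _ ha hga ↦
    Setoid.eq_of_mem_eqv_class hP.2 (hG g ▸ Set.vadd_mem_vadd_set hB) (Set.vadd_mem_vadd_set ha)
      hB hga

lemma eq_orbit_of_isPartition [IsPretransitive G X] (hP : Setoid.IsPartition P)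
    (hG : ∀ g : G, g +ᵥ P = P) (hB : B ∈ P) : P = orbit G B := by
  have hmem (g : G) : g +ᵥ B ∈ P := hG g ▸ Set.vadd_mem_vadd_set hB
  refine Set.Subset.antisymm (fun A hA ↦ ?_) (Set.range_subset_iff.2 hmem)
  obtain ⟨a, ha⟩ := Setoid.nonempty_of_mem_partition hP hA
  obtain ⟨b, hb⟩ := Setoid.nonempty_of_mem_partition hP hB
  obtain ⟨g, rfl⟩ := exists_vadd_eq G b a
  exact ⟨g, Setoid.eq_of_mem_eqv_class hP.2 (hmem g) (Set.vadd_mem_vadd_set hb) hA ha⟩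

end Action

section Cosets

variable {G K : Type*} [AddGroup G] [AddGroup K]

lemma exists_eq_orbit_addSubgroup_of_isPartition {P : Set (Set G)} (hP : Setoid.IsPartition P)
    (hG : ∀ g : G, g +ᵥ P = P) : ∃ H : AddSubgroup G, P = orbit G (H : Set G) := by
  obtain ⟨B, ⟨hB, h0⟩, -⟩ := hP.2 0
  have horbit : orbit (stabilizer G B) (0 : G) = stabilizer G B := by
    ext x
    simp [mem_orbit_iff, AddSubgroup.vadd_def]
  have hcoe : (stabilizer G B : Set G) = B :=
    horbit.symm.trans ((isBlock_of_isPartition hP hG hB).orbit_stabilizer_eq h0)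
  exact ⟨stabilizer G B, hcoe.symm ▸ eq_orbit_of_isPartition hP hG hB⟩

lemma ncard_orbit_addSubgroup (H : AddSubgroup G) : (orbit G (H : Set G)).ncard = H.index := by
  rw [← index_stabilizer, stabilizer_addSubgroup]

lemma orbit_ker_eq_range_fiber {φ : G →+ K} (hφ : Function.Surjective φ) :
    orbit G (φ.ker : Set G) = Set.range fun k ↦ {x | φ x = k} := by
  have hcoset (g : G) : g +ᵥ (φ.ker : Set G) = {x | φ x = φ g} := by
    ext x
    rw [Set.mem_vadd_set_iff_neg_vadd_mem, SetLike.mem_coe, AddMonoidHom.mem_ker, vadd_eq_add,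
      map_add, map_neg, neg_add_eq_zero, Set.mem_ofPred_eq, eq_comm]
  rw [orbit, funext hcoset]
  exact hφ.range_comp fun k ↦ {x | φ x = k}

lemma index_ker_of_surjective {φ : G →+ K} (hφ : Function.Surjective φ) :
    φ.ker.index = Nat.card K := by
  rw [index_ker, AddMonoidHom.range_eq_top.2 hφ, card_top]

end Cosets

lemma int_addSubgroup_eq_zmultiples_index (H : AddSubgroup ℤ) : H = zmultiples (H.index : ℤ) := by
  obtain ⟨a, rfl⟩ := Int.subgroup_cyclic H
  rw [← zmultiples_eq_closure, Int.index_zmultiples, Int.zmultiples_natAbs]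

lemma addSubgroup_index_injective {G : Type*} [AddGroup G] [IsAddCyclic G] :
    Function.Injective (AddSubgroup.index : AddSubgroup G → ℕ) := by
  intro H H' h
  obtain ⟨g, hg⟩ := IsAddCyclic.exists_generator (α := G)
  have hsurj : Function.Surjective (zmultiplesHom G g) := hg
  apply comap_injective hsurj
  rw [int_addSubgroup_eq_zmultiples_index (H.comap _),
    int_addSubgroup_eq_zmultiples_index (H'.comap _), index_comap_of_surjective _ hsurj,
    index_comap_of_surjective _ hsurj, h]

theorem shift_invariant_partition_iff_residue_classes_general {G K : Type*} [AddCommGroup G]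
    [AddGroup K] {g : G} (hg : zmultiples g = ⊤) {φ : G →+ K} (hφ : Function.Surjective φ)
    {P : Set (Set G)} (hP : Setoid.IsPartition P) (hcard : P.ncard = Nat.card K) :
    (∀ A ∈ P, (fun x ↦ x + g) '' A ∈ P) ↔ P = Set.range fun k ↦ {x | φ x = k} := by
  have hshift : (fun x ↦ x + g) = (g +ᵥ ·) := funext fun x ↦ add_comm x g
  have hcyc : IsAddCyclic G := ⟨g, (eq_top_iff' _).1 hg⟩
  rw [hshift, ← orbit_ker_eq_range_fiber hφ]
  simp only [Set.image_vadd]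
  rw [← vadd_eq_iff_forall_vadd_mem_of_isPartition hP, ← forall_vadd_eq_iff_of_zmultiples_eq_top hg]
  constructor
  · intro hG
    obtain ⟨H, rfl⟩ := exists_eq_orbit_addSubgroup_of_isPartition hP hG
    have hindex : H.index = φ.ker.index := by
      rw [← ncard_orbit_addSubgroup, hcard, index_ker_of_surjective hφ]
    rw [addSubgroup_index_injective hindex]
  · rintro rfl h
    exact vadd_orbit h _

lemma zmod_zmultiples_one (n : ℕ) : zmultiples (1 : ZMod n) = ⊤ :=
  (eq_top_iff' _).2 (ZMod.intCast_surjective.forall.2 fun k ↦ intCast_mem_zmultiples_one k)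

/-- A partition of `ZMod (2^n)` with exactly `2^c` blocks is shift-invariant
iff it is the residue-class partition modulo `2^c`, i.e. its blocks are exactly
the fibers of the reduction homomorphism `ZMod (2^n) → ZMod (2^c)`. -/
theorem shift_invariant_partition_iff_residue_classes
    (n c : ℕ) (hc : c ≤ n)
    (P : Set (Set (ZMod (2 ^ n)))) (hP : Setoid.IsPartition P)
    (hcard : P.ncard = 2 ^ c) :
    (∀ A ∈ P, (fun x => x + 1) '' A ∈ P) ↔
      P = Set.range (fun μ : ZMod (2 ^ c) =>
        {x : ZMod (2 ^ n) |
          ZMod.castHom (pow_dvd_pow 2 hc) (ZMod (2 ^ c)) x = μ}) :=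
  shift_invariant_partition_iff_residue_classes_general (zmod_zmultiples_one _)
    (φ := (ZMod.castHom (pow_dvd_pow 2 hc) (ZMod (2 ^ c))).toAddMonoidHom)
    (ZMod.castHom_surjective (pow_dvd_pow 2 hc)) hP (hcard.trans (Nat.card_zmod _).symm)
end

section
/- Let P be a shift-invariant partition of ZMod N (0 < N) with exactly K blocks. Then for every block A of P: (i) A + K = A; (ii) A + m ≠ A for every m with 0 < m < K (so K is the minimal positive period of each block under the shift); and (iii) K divides N. -/
/-!
A block of a partition is determined by any one of its points, so a transitive group that preserves
a partition permutes its blocks transitively: the orbit of a block `A` is the whole partition. When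
the group is generated by a single element `g`, the orbit of `A` has as many elements as the
minimal period of `A` under `g`, so `g ^ m` fixes `A` exactly when `m` is a multiple of the number
of blocks. For the shift on `ZMod N`, apply this to `m = K`, to `0 < m < K`, and to `m = N`.
-/

open MulAction Subgroup
open scoped Pointwise

section MulAction

variable {G X : Type*} [Group G] [MulAction G X] {P : Set (Set X)} {A : Set X}

lemma smul_eq_self_of_isPartition {g : G} (hP : Setoid.IsPartition P)
    (hg : ∀ A ∈ P, g • A ∈ P) : g • P = P := by
  refine (Set.smul_set_subset_iff.2 hg).antisymm fun A hA ↦ ?_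
  obtain ⟨a, ha⟩ := Setoid.nonempty_of_mem_partition hP hA
  obtain ⟨B, ⟨hB, haB⟩, -⟩ := hP.2 (g⁻¹ • a)
  have hgB : g • B = A :=
    (hP.2 a).unique ⟨hg B hB, Set.mem_smul_set_iff_inv_smul_mem.2 haB⟩ ⟨hA, ha⟩
  exact hgB ▸ Set.smul_mem_smul_set hB

lemma orbit_eq_of_isPartition [IsPretransitive G X] (hP : Setoid.IsPartition P)
    (hG : ∀ g : G, g • P = P) (hA : A ∈ P) : orbit G A = P := by
  have hmem (g : G) : g • A ∈ P := hG g ▸ Set.smul_mem_smul_set hA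
  refine (Set.range_subset_iff.2 hmem).antisymm fun B hB ↦ ?_
  obtain ⟨a, ha⟩ := Setoid.nonempty_of_mem_partition hP hA
  obtain ⟨b, hb⟩ := Setoid.nonempty_of_mem_partition hP hB
  obtain ⟨g, rfl⟩ := exists_smul_eq G a b
  exact ⟨g, (hP.2 (g • a)).unique ⟨hmem g, Set.smul_mem_smul_set ha⟩ ⟨hB, hb⟩⟩

lemma ncard_orbit_zpowers (g : G) (x : X) :
    (orbit (zpowers g) x).ncard = Function.minimalPeriod (g • ·) x := by
  rw [← Nat.card_coe_set_eq, Nat.card_congr (orbitZPowersEquiv g x), Nat.card_zmod]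

theorem shift_invariant_partition_period_general {g : G} [IsPretransitive (zpowers g) X] {K : ℕ}
    (hP : Setoid.IsPartition P) (hg : ∀ A ∈ P, g • A ∈ P) (hK : P.encard = K) (hA : A ∈ P) (m : ℤ) :
    g ^ m • A = A ↔ (K : ℤ) ∣ m := by
  have hzpowers : zpowers g ≤ stabilizer G P :=
    zpowers_le.2 (smul_eq_self_of_isPartition hP hg)
  have horbit : orbit (zpowers g) A = P :=
    orbit_eq_of_isPartition hP (fun h ↦ hzpowers h.2) hA
  have hperiod : Function.minimalPeriod (g • ·) A = K := by
    rw [← ncard_orbit_zpowers, horbit, Set.ncard, hK, ENat.toNat_natCast]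
  rw [zpow_smul_eq_iff_minimalPeriod_dvd, hperiod]

end MulAction

instance isPretransitive_zpowers_addRight_one (N : ℕ) :
    IsPretransitive (zpowers (Equiv.addRight (1 : ZMod N))) (ZMod N) where
  exists_smul_eq x y := by
    obtain ⟨n, hn⟩ := ZMod.intCast_surjective (y - x)
    refine ⟨⟨Equiv.addRight 1 ^ n, zpow_mem_zpowers _ n⟩, ?_⟩
    simp [Subgroup.smul_def, hn]

lemma addRight_zpow_smul_set {G : Type*} [AddGroup G] (a : G) (m : ℤ) (A : Set G) :
    Equiv.addRight a ^ m • A = (fun x ↦ x + m • a) '' A := by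
  simp [← Set.image_smul]

/-- For a shift-invariant partition of `ZMod N` with exactly `K` blocks:
each block has minimal positive period `K` under the shift, and `K ∣ N`. -/
theorem shift_invariant_partition_period
    (N K : ℕ) (hN : 0 < N)
    (P : Set (Set (ZMod N))) (hP : Setoid.IsPartition P)
    (hshift : ∀ A ∈ P, (fun x => x + 1) '' A ∈ P)
    (hK : P.ncard = K) :
    ∀ A ∈ P,
      ((fun x => x + (K : ZMod N)) '' A = A) ∧
      (∀ m : ℕ, 0 < m → m < K → (fun x => x + (m : ZMod N)) '' A ≠ A) ∧
      K ∣ N := by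
  intro A hA
  have : NeZero N := ⟨hN.ne'⟩
  have hencard : P.encard = K := by rw [← hK, P.toFinite.cast_ncard_eq]
  have hfix (m : ℕ) : (fun x => x + (m : ZMod N)) '' A = A ↔ K ∣ m := by
    have h := shift_invariant_partition_period_general (g := Equiv.addRight (1 : ZMod N))
      hP hshift hencard hA m
    simpa only [addRight_zpow_smul_set, zsmul_one, Int.cast_natCast,
      Int.natCast_dvd_natCast] using h
  exact ⟨(hfix K).2 dvd_rfl, fun m hm hmK h ↦ Nat.not_dvd_of_pos_of_lt hm hmK ((hfix m).1 h),
    (hfix N).1 (by simp)⟩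
end

section
/- Let f, g : ℝ → ℝ be differentiable functions such that (deriv f x)^2 = (deriv g x)^2 for every x ∈ ℝ and deriv g x ≠ 0 for every x ∈ ℝ. Then either deriv f x = deriv g x for all x, or deriv f x = −(deriv g x) for all x; consequently there exists a constant C such that f = g + C everywhere or f = −g + C everywhere. -/
/-!
A derivative may be discontinuous, but by Darboux's theorem it has the intermediate value property,
so on a convex set it keeps a constant sign as soon as it does not vanish. This applies to `g'`, and
to `f'` because `|f'| = |g'|`. The two signs then decide, uniformly in `x`, between `f' = g'` and
`f' = -g'`, and functions with equal derivatives differ by a constant.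
-/

lemma forall_eq_or_forall_eq_neg_of_abs_eq_abs {α G : Type*} [AddCommGroup G] [LinearOrder G]
    [IsOrderedAddMonoid G] {s : Set α} {u v : α → G}
    (hu : (∀ x ∈ s, u x < 0) ∨ ∀ x ∈ s, 0 < u x) (hv : (∀ x ∈ s, v x < 0) ∨ ∀ x ∈ s, 0 < v x)
    (habs : ∀ x ∈ s, |u x| = |v x|) :
    (∀ x ∈ s, u x = v x) ∨ ∀ x ∈ s, u x = -v x := by
  rcases hu with hu_neg | hu_pos <;> rcases hv with hv_neg | hv_pos
  · refine .inl fun x hx => ?_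
    simpa only [abs_of_neg (hu_neg x hx), abs_of_neg (hv_neg x hx), neg_inj] using habs x hx
  · refine .inr fun x hx => ?_
    simpa only [abs_of_neg (hu_neg x hx), abs_of_pos (hv_pos x hx), neg_eq_iff_eq_neg]
      using habs x hx
  · refine .inr fun x hx => ?_
    simpa only [abs_of_pos (hu_pos x hx), abs_of_neg (hv_neg x hx)] using habs x hx
  · refine .inl fun x hx => ?_
    simpa only [abs_of_pos (hu_pos x hx), abs_of_pos (hv_pos x hx)] using habs x hx

lemma exists_eq_add_of_hasDerivWithinAt_eq {𝕜 E : Type*} [RCLike 𝕜] [NormedAddCommGroup E]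
    [NormedSpace 𝕜 E] {s : Set 𝕜} {f g f' : 𝕜 → E} (hs : Convex ℝ s)
    (hf : ∀ x ∈ s, HasDerivWithinAt f (f' x) s x) (hg : ∀ x ∈ s, HasDerivWithinAt g (f' x) s x) :
    ∃ C : E, ∀ x ∈ s, f x = g x + C := by
  rcases s.eq_empty_or_nonempty with rfl | ⟨a, ha⟩
  · exact ⟨0, fun _ hx => hx.elim⟩
  refine ⟨f a - g a, fun x hx => ?_⟩
  have hderiv : ∀ y ∈ s, HasDerivWithinAt (f - g) 0 s y := fun y hy =>
    ((hf y hy).sub (hg y hy)).congr_deriv (sub_self _)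
  have hbound : ‖(f - g) x - (f - g) a‖ ≤ 0 * ‖x - a‖ :=
    hs.norm_image_sub_le_of_norm_hasDerivWithin_le hderiv (fun _ _ => norm_zero.le) ha hx
  have hconst : f x - g x = f a - g a := by
    rwa [zero_mul, norm_le_zero_iff, sub_eq_zero] at hbound
  exact sub_eq_iff_eq_add'.mp hconst

section Real

variable {s : Set ℝ} {f g f' g' : ℝ → ℝ}

lemma hasDerivWithinAt_forall_eq_or_forall_eq_neg_of_abs_eq_abs (hs : Convex ℝ s)
    (hf : ∀ x ∈ s, HasDerivWithinAt f (f' x) s x) (hg : ∀ x ∈ s, HasDerivWithinAt g (g' x) s x)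
    (habs : ∀ x ∈ s, |f' x| = |g' x|) (hne : ∀ x ∈ s, g' x ≠ 0) :
    (∀ x ∈ s, f' x = g' x) ∨ ∀ x ∈ s, f' x = -g' x := by
  have hf_ne : ∀ x ∈ s, f' x ≠ 0 := fun x hx =>
    abs_ne_zero.mp (habs x hx ▸ abs_ne_zero.mpr (hne x hx))
  exact forall_eq_or_forall_eq_neg_of_abs_eq_abs
    (hasDerivWithinAt_forall_lt_or_forall_gt_of_forall_ne hs hf hf_ne)
    (hasDerivWithinAt_forall_lt_or_forall_gt_of_forall_ne hs hg hne) habs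

theorem deriv_sq_eq_imp_eq_or_neg_general (hs : Convex ℝ s)
    (hf : ∀ x ∈ s, HasDerivWithinAt f (f' x) s x) (hg : ∀ x ∈ s, HasDerivWithinAt g (g' x) s x)
    (hsq : ∀ x ∈ s, f' x ^ 2 = g' x ^ 2) (hne : ∀ x ∈ s, g' x ≠ 0) :
    ((∀ x ∈ s, f' x = g' x) ∨ ∀ x ∈ s, f' x = -g' x) ∧
      ∃ C : ℝ, (∀ x ∈ s, f x = g x + C) ∨ ∀ x ∈ s, f x = -g x + C := by
  have hderiv : (∀ x ∈ s, f' x = g' x) ∨ ∀ x ∈ s, f' x = -g' x :=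
    hasDerivWithinAt_forall_eq_or_forall_eq_neg_of_abs_eq_abs hs hf hg
      (fun x hx => (sq_eq_sq_iff_abs_eq_abs _ _).mp (hsq x hx)) hne
  refine ⟨hderiv, exists_or.mpr (hderiv.imp (fun heq => ?_) fun heq => ?_)⟩
  · exact exists_eq_add_of_hasDerivWithinAt_eq hs hf
      fun x hx => (hg x hx).congr_deriv (heq x hx).symm
  · exact exists_eq_add_of_hasDerivWithinAt_eq hs hf
      fun x hx => (hg x hx).neg.congr_deriv (heq x hx).symm

end Real

/-- If two differentiable real functions have derivatives that are equal in
square, and the second derivative function never vanishes, then the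
derivatives agree everywhere or are opposite everywhere; consequently the
functions differ by a constant, possibly after a sign flip. -/
theorem deriv_sq_eq_imp_eq_or_neg
    (f g : ℝ → ℝ) (hf : Differentiable ℝ f) (hg : Differentiable ℝ g)
    (hsq : ∀ x : ℝ, (deriv f x) ^ 2 = (deriv g x) ^ 2)
    (hne : ∀ x : ℝ, deriv g x ≠ 0) :
    ((∀ x, deriv f x = deriv g x) ∨ (∀ x, deriv f x = -(deriv g x))) ∧
      ∃ C : ℝ, (∀ x, f x = g x + C) ∨ (∀ x, f x = -g x + C) := by
  simpa only [Set.mem_univ, forall_const] using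
    deriv_sq_eq_imp_eq_or_neg_general convex_univ
      (fun x _ => (hf x).hasDerivAt.hasDerivWithinAt)
      (fun x _ => (hg x).hasDerivAt.hasDerivWithinAt) (fun x _ => hsq x) (fun x _ => hne x)
end
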